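/- Let K := Σ_{k=0}^∞ (−1)^k/(2k+1)² be the Catalan constant. Then (π/2) · ∫₀^∞ (x²/(1+x²)) · cosh(πx/2) / sinh²(πx/2) dx = 2K − 1; that is, the Nevanlinna measure ρ(dx) = (π/4)·(x²/(1+x²))·cosh(πx/2)/sinh²(πx/2) dx on ℝ of the free-probability analogue of the background driving Lévy process of the hyperbolic cosine distribution has total mass 2K − 1. -/

import Mathlib

open MeasureTheory Set

/-- The Catalan constant `K = Σ_{k≥0} (−1)^k/(2k+1)²`. -/
noncomputable def catalanConstant : ℝ :=
  ∑' k : ℕ, (-1 : ℝ) ^ k / (2 * k + 1) ^ 2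

open Filter Topology

/-- The partial fraction expansion of the hyperbolic cotangent. -/
lemma hasSum_coth_partial_fractions {x : ℝ} (hx : 0 < x) :
    HasSum (fun n : ℕ => 2 * x / (x ^ 2 + ((n : ℝ) + 1) ^ 2))
      (Real.pi * (Real.cosh (Real.pi * x) / Real.sinh (Real.pi * x)) - 1 / x) := by
  have hz : (x * Complex.I : ℂ) ∈ Complex.integerComplement := by
    rintro ⟨n, hn⟩
    have := congrArg Complex.im hn
    simp at this
    exact hx.ne this
  have hxc : (x : ℂ) ≠ 0 := by exact_mod_cast hx.ne'
  have hsinh : Complex.sinh (Real.pi * x) ≠ 0 := by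
    exact_mod_cast (Real.sinh_pos_iff.2 (mul_pos Real.pi_pos hx)).ne'
  have h := ((summable_cotTerm hz).hasSum_iff_tendsto_nat.mpr
    (tendsto_logDeriv_euler_cot_sub hz)).mul_left Complex.I
  rw [← Complex.hasSum_ofReal]
  convert! h using 1
  · funext n
    have hn : (x ^ 2 + ((n : ℂ) + 1) ^ 2) ≠ 0 := by
      exact_mod_cast (by positivity : x ^ 2 + ((n : ℝ) + 1) ^ 2 ≠ 0)
    have hfac : (x * Complex.I - (n + 1)) * (x * Complex.I + (n + 1)) =
        -(x ^ 2 + ((n : ℂ) + 1) ^ 2) := by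
      linear_combination (x : ℂ) ^ 2 * Complex.I_sq
    have hne : (x * Complex.I - (n + 1)) * (x * Complex.I + (n + 1)) ≠ 0 := by
      rw [hfac]; exact neg_ne_zero.2 hn
    rw [cotTerm, one_div_add_one_div (left_ne_zero_of_mul hne) (right_ne_zero_of_mul hne), hfac]
    push_cast
    field_simp
    linear_combination (2 * x : ℂ) * Complex.I_sq
  · rw [Complex.cot, ← mul_assoc, Complex.cos_mul_I, Complex.sin_mul_I]
    push_cast
    field_simp

/-- The partial fraction expansion of the hyperbolic cosecant. -/
lemma hasSum_csch_partial_fractions {x : ℝ} (hx : 0 < x) :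
    HasSum (fun n : ℕ => (-1 : ℝ) ^ (n + 1) * (2 * x / (x ^ 2 + ((n : ℝ) + 1) ^ 2)))
      (Real.pi / Real.sinh (Real.pi * x) - 1 / x) := by
  set f : ℕ → ℝ := fun n => 2 * x / (x ^ 2 + ((n : ℝ) + 1) ^ 2) with hf
  set e : ℕ → ℝ := fun n => if Odd n then f n else 0 with he
  have hinj : Function.Injective (fun m : ℕ => 2 * m + 1) := fun a b h => by
    simpa using h
  have hsum_e : HasSum e (1 / 2 * (Real.pi * (Real.cosh (Real.pi * (x / 2)) /
      Real.sinh (Real.pi * (x / 2))) - 1 / (x / 2))) := by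
    rw [← hinj.hasSum_iff]
    · refine ((hasSum_coth_partial_fractions (half_pos hx)).mul_left (1 / 2)).congr_fun ?_
      intro m
      have : Odd (2 * m + 1) := ⟨m, rfl⟩
      simp only [he, hf, Function.comp, this, if_true]
      push_cast
      field_simp
      ring
    · intro n hn
      have : ¬ Odd n := fun ⟨m, hm⟩ => hn ⟨m, hm.symm⟩
      simp [he, this]
  have h := (hsum_e.mul_left 2).sub (hasSum_coth_partial_fractions hx)
  convert! h using 1
  · funext n
    rcases Nat.even_or_odd n with hn | hn
    · simp [he, hf, Nat.not_odd_iff_even.2 hn, hn.add_one.neg_one_pow]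
    · simp only [he, hf, hn, hn.add_one.neg_one_pow, if_true]
      ring
  · have hs : 0 < Real.sinh (Real.pi * (x / 2)) :=
      Real.sinh_pos_iff.2 (mul_pos Real.pi_pos (half_pos hx))
    have hc := Real.cosh_pos (Real.pi * (x / 2))
    have hpx : Real.pi * x = 2 * (Real.pi * (x / 2)) := by ring
    rw [hpx, Real.sinh_two_mul, Real.cosh_two_mul]
    field_simp
    linear_combination (-x * Real.pi) * Real.cosh_sq (Real.pi * x / 2)

/-- An antiderivative of `1 / (1 + x²)²`. -/
lemma hasDerivAt_half_arctan_add (x : ℝ) :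
    HasDerivAt (fun x : ℝ => (Real.arctan x + x / (1 + x ^ 2)) / 2) (1 / (1 + x ^ 2) ^ 2) x := by
  have hx : 1 + x ^ 2 ≠ 0 := by positivity
  have h := ((Real.hasDerivAt_arctan x).add ((hasDerivAt_id x).div
    (((hasDerivAt_id x).pow 2).const_add 1) hx)).div_const 2
  convert! h using 1
  simp
  field_simp
  ring

lemma tendsto_div_one_add_sq_atTop :
    Tendsto (fun x : ℝ => x / (1 + x ^ 2)) atTop (𝓝 0) := by
  refine squeeze_zero' (g := fun x : ℝ => x⁻¹) ?_ ?_ tendsto_inv_atTop_zero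
  · filter_upwards [eventually_gt_atTop 0] with x hx
    positivity
  · filter_upwards [eventually_gt_atTop 0] with x hx
    rw [div_le_iff₀ (by positivity)]
    field_simp
    linarith

lemma tendsto_half_arctan_add_atTop :
    Tendsto (fun x : ℝ => (Real.arctan x + x / (1 + x ^ 2)) / 2) atTop (𝓝 (Real.pi / 4)) := by
  have harc : Tendsto Real.arctan atTop (𝓝 (Real.pi / 2)) :=
    Real.tendsto_arctan_atTop.mono_right nhdsWithin_le_nhds
  convert! (harc.add tendsto_div_one_add_sq_atTop).div_const 2 using 2
  ring

lemma integrableOn_one_div_one_add_sq_sq :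
    IntegrableOn (fun x : ℝ => 1 / (1 + x ^ 2) ^ 2) (Ioi 0) :=
  integrableOn_Ioi_deriv_of_nonneg' (fun x _ => hasDerivAt_half_arctan_add x)
    (fun x _ => by positivity) tendsto_half_arctan_add_atTop

lemma integral_one_div_one_add_sq_sq :
    ∫ x in Ioi (0 : ℝ), 1 / (1 + x ^ 2) ^ 2 = Real.pi / 4 := by
  rw [integral_Ioi_of_hasDerivAt_of_nonneg' (fun x _ => hasDerivAt_half_arctan_add x)
    (fun x _ => by positivity) tendsto_half_arctan_add_atTop]
  simp

/-- An antiderivative of `x² / ((1 + x²)² (x² + a²))`. -/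
lemma hasDerivAt_partial_fractions {a : ℝ} (ha : 1 < a) (x : ℝ) :
    HasDerivAt (fun x : ℝ => a ^ 2 / (a ^ 2 - 1) ^ 2 * Real.arctan x
        - 1 / (a ^ 2 - 1) * ((Real.arctan x + x / (1 + x ^ 2)) / 2)
        - a / (a ^ 2 - 1) ^ 2 * Real.arctan (x / a))
      (x ^ 2 / ((1 + x ^ 2) ^ 2 * (x ^ 2 + a ^ 2))) x := by
  have ha1 : a ^ 2 - 1 ≠ 0 := by nlinarith
  have ha0 : a ≠ 0 := by linarith
  have hx : 1 + x ^ 2 ≠ 0 := by positivity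
  have hxa : x ^ 2 + a ^ 2 ≠ 0 := by positivity
  have h := (((Real.hasDerivAt_arctan x).const_mul (a ^ 2 / (a ^ 2 - 1) ^ 2)).sub
    ((hasDerivAt_half_arctan_add x).const_mul (1 / (a ^ 2 - 1)))).sub
    ((((hasDerivAt_id x).div_const a).arctan).const_mul (a / (a ^ 2 - 1) ^ 2))
  convert! h using 1
  have hxa' : 1 + (id x / a) ^ 2 = (x ^ 2 + a ^ 2) / a ^ 2 := by
    simp only [id]
    field_simp
    ring
  rw [hxa']
  field_simp
  ring

lemma tendsto_partial_fractions_atTop {a : ℝ} (ha : 1 < a) :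
    Tendsto (fun x : ℝ => a ^ 2 / (a ^ 2 - 1) ^ 2 * Real.arctan x
        - 1 / (a ^ 2 - 1) * ((Real.arctan x + x / (1 + x ^ 2)) / 2)
        - a / (a ^ 2 - 1) ^ 2 * Real.arctan (x / a)) atTop
      (𝓝 (Real.pi / 4 / (1 + a) ^ 2)) := by
  have harc : Tendsto Real.arctan atTop (𝓝 (Real.pi / 2)) :=
    Real.tendsto_arctan_atTop.mono_right nhdsWithin_le_nhds
  have harca : Tendsto (fun x : ℝ => Real.arctan (x / a)) atTop (𝓝 (Real.pi / 2)) :=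
    harc.comp (tendsto_id.atTop_div_const (by linarith))
  have h := ((harc.const_mul (a ^ 2 / (a ^ 2 - 1) ^ 2)).sub
    (tendsto_half_arctan_add_atTop.const_mul (1 / (a ^ 2 - 1)))).sub
    (harca.const_mul (a / (a ^ 2 - 1) ^ 2))
  convert! h using 2
  have hm : a - 1 ≠ 0 := by linarith
  have hp : 1 + a ≠ 0 := by linarith
  have hfac : a ^ 2 - 1 = (a - 1) * (1 + a) := by ring
  rw [hfac]
  field_simp
  ring

lemma integrableOn_sq_div_one_add_sq_sq_mul {a : ℝ} (ha : 1 < a) :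
    IntegrableOn (fun x : ℝ => x ^ 2 / ((1 + x ^ 2) ^ 2 * (x ^ 2 + a ^ 2))) (Ioi 0) :=
  integrableOn_Ioi_deriv_of_nonneg' (fun x _ => hasDerivAt_partial_fractions ha x)
    (fun x _ => by positivity) (tendsto_partial_fractions_atTop ha)

lemma integral_sq_div_one_add_sq_sq_mul {a : ℝ} (ha : 1 < a) :
    ∫ x in Ioi (0 : ℝ), x ^ 2 / ((1 + x ^ 2) ^ 2 * (x ^ 2 + a ^ 2)) =
      Real.pi / 4 / (1 + a) ^ 2 := by
  rw [integral_Ioi_of_hasDerivAt_of_nonneg' (fun x _ => hasDerivAt_partial_fractions ha x)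
    (fun x _ => by positivity) (tendsto_partial_fractions_atTop ha)]
  simp

lemma summable_catalan_terms : Summable fun k : ℕ => 1 / (2 * (k : ℝ) + 1) ^ 2 := by
  have h := (summable_nat_add_iff 1).2 (Real.summable_one_div_nat_pow.2 one_lt_two)
  refine h.of_nonneg_of_le (fun k => by positivity) fun k => ?_
  push_cast
  gcongr
  linarith [(Nat.cast_nonneg k : (0 : ℝ) ≤ k)]

lemma catalanConstant_eq_one_add :
    catalanConstant = 1 + ∑' n : ℕ, (-1 : ℝ) ^ (n + 1) / (2 * ((n : ℝ) + 1) + 1) ^ 2 := by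
  have hs : Summable fun k : ℕ => (-1 : ℝ) ^ k / (2 * (k : ℝ) + 1) ^ 2 := by
    refine summable_catalan_terms.of_norm_bounded fun k => ?_
    simp
  rw [catalanConstant, hs.tsum_eq_zero_add]
  simp

lemma inv_sinh_le {x : ℝ} (hx : 0 < x) :
    (Real.sinh (Real.pi * x / 2))⁻¹ ≤ 2 / (Real.pi * x) := by
  have hpx : 0 < Real.pi * x := mul_pos Real.pi_pos hx
  rw [inv_le_comm₀ (Real.sinh_pos_iff.2 (by positivity)) (by positivity), inv_div]
  exact Real.self_le_sinh_iff.2 (by positivity)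

lemma sq_mul_cosh_le_two_mul_sinh_sq (y : ℝ) :
    y ^ 2 * Real.cosh y ≤ 2 * Real.sinh y ^ 2 := by
  have hy : (y / 2) ^ 2 ≤ Real.sinh (y / 2) ^ 2 := by
    rw [sq_le_sq, Real.abs_sinh]
    exact Real.self_le_sinh_iff.2 (abs_nonneg _)
  have hc := Real.cosh_sq (y / 2)
  have hy2 : y = 2 * (y / 2) := by ring
  rw [hy2, Real.sinh_two_mul, Real.cosh_two_mul, ← hy2, mul_pow, mul_pow, hc]
  nlinarith [sq_nonneg (Real.sinh (y / 2)), mul_le_mul_of_nonneg_right hy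
    (sq_nonneg (Real.sinh (y / 2)))]

lemma integrableOn_two_mul_div_one_add_sq_sq_div_sinh :
    IntegrableOn (fun x : ℝ => 2 * x / (1 + x ^ 2) ^ 2 * (Real.sinh (Real.pi * x / 2))⁻¹)
      (Ioi 0) := by
  refine (integrableOn_one_div_one_add_sq_sq.const_mul (4 / Real.pi)).mono'
    (Measurable.aestronglyMeasurable (by fun_prop)) ?_
  filter_upwards [ae_restrict_mem measurableSet_Ioi] with x hx
  have hx0 : 0 < x := hx
  have hs : 0 < Real.sinh (Real.pi * x / 2) := Real.sinh_pos_iff.2 (by positivity)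
  rw [Real.norm_of_nonneg (by positivity)]
  calc 2 * x / (1 + x ^ 2) ^ 2 * (Real.sinh (Real.pi * x / 2))⁻¹
      ≤ 2 * x / (1 + x ^ 2) ^ 2 * (2 / (Real.pi * x)) := by
        gcongr
        exact inv_sinh_le hx0
    _ = 4 / Real.pi * (1 / (1 + x ^ 2) ^ 2) := by
        field_simp
        norm_num

lemma integrableOn_sq_div_mul_cosh_div_sinh_sq :
    IntegrableOn (fun x : ℝ => x ^ 2 / (1 + x ^ 2) *
      (Real.pi / 2 * (Real.cosh (Real.pi * x / 2) / Real.sinh (Real.pi * x / 2) ^ 2))) (Ioi 0) := by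
  refine (integrable_inv_one_add_sq.integrableOn.const_mul (4 / Real.pi)).mono'
    (Measurable.aestronglyMeasurable (by fun_prop)) ?_
  filter_upwards [ae_restrict_mem measurableSet_Ioi] with x hx
  have hx0 : 0 < x := hx
  have hs : 0 < Real.sinh (Real.pi * x / 2) := Real.sinh_pos_iff.2 (by positivity)
  have hc := Real.cosh_pos (Real.pi * x / 2)
  have h := sq_mul_cosh_le_two_mul_sinh_sq (Real.pi * x / 2)
  rw [Real.norm_of_nonneg (by positivity)]
  have hratio : x ^ 2 * (Real.cosh (Real.pi * x / 2) / Real.sinh (Real.pi * x / 2) ^ 2) ≤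
      8 / Real.pi ^ 2 := by
    rw [← mul_div_assoc, div_le_div_iff₀ (by positivity) (by positivity)]
    linarith
  calc x ^ 2 / (1 + x ^ 2) *
        (Real.pi / 2 * (Real.cosh (Real.pi * x / 2) / Real.sinh (Real.pi * x / 2) ^ 2))
      = Real.pi / 2 * (1 + x ^ 2)⁻¹ *
        (x ^ 2 * (Real.cosh (Real.pi * x / 2) / Real.sinh (Real.pi * x / 2) ^ 2)) := by ring
    _ ≤ Real.pi / 2 * (1 + x ^ 2)⁻¹ * (8 / Real.pi ^ 2) := by gcongr
    _ = 4 / Real.pi * (1 + x ^ 2)⁻¹ := by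
        field_simp
        norm_num

/-- The integral of `2x / (1 + x²)²` against the hyperbolic cosecant. -/
lemma integral_two_mul_div_one_add_sq_sq_div_sinh :
    ∫ x in Ioi (0 : ℝ), 2 * x / (1 + x ^ 2) ^ 2 * (Real.sinh (Real.pi * x / 2))⁻¹ =
      2 * catalanConstant - 1 := by
  set F : ℕ → ℝ → ℝ := fun n x => (-1 : ℝ) ^ (n + 1) * (8 / Real.pi) *
    (x ^ 2 / ((1 + x ^ 2) ^ 2 * (x ^ 2 + (2 * ((n : ℝ) + 1)) ^ 2))) with hF
  have hone (n : ℕ) : (1 : ℝ) < 2 * ((n : ℝ) + 1) := by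
    linarith [(Nat.cast_nonneg n : (0 : ℝ) ≤ n)]
  have hint (n : ℕ) : IntegrableOn (F n) (Ioi 0) :=
    (integrableOn_sq_div_one_add_sq_sq_mul (hone n)).const_mul _
  have hnorm (n : ℕ) : ∫ x in Ioi (0 : ℝ), ‖F n x‖ = 2 * (1 / (2 * ((n + 1 : ℕ) : ℝ) + 1) ^ 2) := by
    have h (x : ℝ) : ‖F n x‖ = 8 / Real.pi *
        (x ^ 2 / ((1 + x ^ 2) ^ 2 * (x ^ 2 + (2 * ((n : ℝ) + 1)) ^ 2))) := by
      rw [hF, norm_mul, norm_mul, norm_pow, norm_neg, norm_one, one_pow, one_mul,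
        Real.norm_of_nonneg (by positivity), Real.norm_of_nonneg (by positivity)]
    simp_rw [h]
    rw [integral_const_mul, integral_sq_div_one_add_sq_sq_mul (hone n)]
    push_cast
    field_simp
    ring
  have hsummable : Summable fun n => ∫ x in Ioi (0 : ℝ), ‖F n x‖ := by
    simp_rw [hnorm]
    exact ((summable_nat_add_iff 1).2 summable_catalan_terms).mul_left 2
  have hF_sum := hasSum_integral_of_summable_integral_norm hint hsummable
  have htsum (x : ℝ) (hx : x ∈ Ioi (0 : ℝ)) : ∑' n, F n x =
      2 * x / (1 + x ^ 2) ^ 2 * (Real.sinh (Real.pi * x / 2))⁻¹ -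
        4 / Real.pi * (1 / (1 + x ^ 2) ^ 2) := by
    have hx0 : 0 < x := hx
    have hsinh : Real.sinh (Real.pi * (x / 2)) ≠ 0 :=
      (Real.sinh_pos_iff.2 (mul_pos Real.pi_pos (half_pos hx0))).ne'
    have h := (hasSum_csch_partial_fractions (half_pos hx0)).mul_left
      (2 * x / (1 + x ^ 2) ^ 2 / Real.pi)
    have hpx : Real.pi * x / 2 = Real.pi * (x / 2) := by ring
    rw [hpx]
    refine (h.congr_fun fun n => ?_).tsum_eq.trans ?_
    · simp only [hF]
      field_simp
      ring
    · field_simp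
      ring
  have hvalue (n : ℕ) : ∫ x in Ioi (0 : ℝ), F n x =
      2 * ((-1 : ℝ) ^ (n + 1) / (2 * ((n : ℝ) + 1) + 1) ^ 2) := by
    simp only [hF]
    rw [integral_const_mul, integral_sq_div_one_add_sq_sq_mul (hone n)]
    field_simp
    ring
  have htotal : ∫ x in Ioi (0 : ℝ), ∑' n, F n x =
      (∫ x in Ioi (0 : ℝ), 2 * x / (1 + x ^ 2) ^ 2 * (Real.sinh (Real.pi * x / 2))⁻¹) - 1 := by
    rw [setIntegral_congr_fun measurableSet_Ioi htsum,
      integral_sub integrableOn_two_mul_div_one_add_sq_sq_div_sinh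
        (integrableOn_one_div_one_add_sq_sq.const_mul _),
      integral_const_mul, integral_one_div_one_add_sq_sq,
      div_mul_div_cancel₀ Real.pi_ne_zero, div_self four_ne_zero]
  simp_rw [hvalue] at hF_sum
  have h := hF_sum.tsum_eq
  rw [tsum_mul_left, htotal] at h
  rw [catalanConstant_eq_one_add]
  linarith

lemma abs_sq_div_mul_neg_inv_sinh_le {x : ℝ} (hx : 0 < x) :
    |x ^ 2 / (1 + x ^ 2) * -(Real.sinh (Real.pi * x / 2))⁻¹| ≤
      2 / Real.pi * (x / (1 + x ^ 2)) := by
  have hs : 0 < Real.sinh (Real.pi * x / 2) := Real.sinh_pos_iff.2 (by positivity)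
  rw [mul_neg, abs_neg, abs_of_nonneg (by positivity)]
  calc x ^ 2 / (1 + x ^ 2) * (Real.sinh (Real.pi * x / 2))⁻¹
      ≤ x ^ 2 / (1 + x ^ 2) * (2 / (Real.pi * x)) := by
        gcongr
        exact inv_sinh_le hx
    _ = 2 / Real.pi * (x / (1 + x ^ 2)) := by field_simp

/-- The total mass of the Nevanlinna measure
`ρ(dx) = (π/4)(x²/(1+x²)) cosh(πx/2)/sinh²(πx/2) dx` of the free-probability analogue of the
background driving Lévy process of the hyperbolic cosine distribution equals `2K − 1`:
`(π/2) ∫₀^∞ (x²/(1+x²)) cosh(πx/2)/sinh²(πx/2) dx = 2K − 1`. -/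
theorem stmt_15 :
    Real.pi / 2 *
        ∫ x in Ioi (0 : ℝ),
          x ^ 2 / (1 + x ^ 2) * (Real.cosh (Real.pi * x / 2) / Real.sinh (Real.pi * x / 2) ^ 2) =
      2 * catalanConstant - 1 := by
  have hu (x : ℝ) (_ : x ∈ Ioi (0 : ℝ)) :
      HasDerivAt (fun x : ℝ => x ^ 2 / (1 + x ^ 2)) (2 * x / (1 + x ^ 2) ^ 2) x := by
    have hx : 1 + x ^ 2 ≠ 0 := by positivity
    convert! (hasDerivAt_pow 2 x).div ((hasDerivAt_pow 2 x).const_add 1) hx using 1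
    push_cast
    ring
  have hv (x : ℝ) (hx : x ∈ Ioi (0 : ℝ)) :
      HasDerivAt (fun x : ℝ => -(Real.sinh (Real.pi * x / 2))⁻¹)
        (Real.pi / 2 * (Real.cosh (Real.pi * x / 2) / Real.sinh (Real.pi * x / 2) ^ 2)) x := by
    have hx0 : 0 < x := hx
    have hs : Real.sinh (Real.pi * x / 2) ≠ 0 := (Real.sinh_pos_iff.2 (by positivity)).ne'
    have hlin : HasDerivAt (fun x : ℝ => Real.pi * x / 2) (Real.pi / 2) x := by
      simpa using ((hasDerivAt_id x).const_mul Real.pi).div_const 2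
    convert! (hlin.sinh.fun_inv hs).neg using 1
    ring
  have hzero : Tendsto (fun x : ℝ => 2 / Real.pi * (x / (1 + x ^ 2))) (𝓝[>] 0) (𝓝 0) := by
    have hcont : Continuous fun x : ℝ => 2 / Real.pi * (x / (1 + x ^ 2)) :=
      continuous_const.mul (continuous_id.div (by fun_prop) fun x => by positivity)
    simpa using (hcont.tendsto 0).mono_left nhdsWithin_le_nhds
  have htop : Tendsto (fun x : ℝ => 2 / Real.pi * (x / (1 + x ^ 2))) atTop (𝓝 0) := by
    simpa using tendsto_div_one_add_sq_atTop.const_mul (2 / Real.pi)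
  have hparts := integral_Ioi_mul_deriv_eq_deriv_mul hu hv
    integrableOn_sq_div_mul_cosh_div_sinh_sq
    (by simpa [Pi.mul_def] using integrableOn_two_mul_div_one_add_sq_sq_div_sinh.neg)
    (squeeze_zero_norm' (eventually_mem_nhdsWithin.mono
      fun _ hx => abs_sq_div_mul_neg_inv_sinh_le hx) hzero)
    (squeeze_zero_norm' ((eventually_gt_atTop 0).mono
      fun _ hx => abs_sq_div_mul_neg_inv_sinh_le hx) htop)
  simp_rw [mul_neg, integral_neg, integral_two_mul_div_one_add_sq_sq_div_sinh] at hparts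
  rw [← integral_const_mul]
  simp_rw [mul_left_comm (Real.pi / 2)]
  rw [hparts]
  ring
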